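/- Let n be a nonnegative integer that cannot be written as n = a + 2b where a and b are generalized pentagonal numbers (i.e. n ≠ k(3k−1)/2 + l(3l−1) for all integers k, l). Then b^4_{3,4}(16n+3) ≡ 0 (mod 8) and b^4_{3,4}(48n+7) ≡ 0 (mod 8). -/

import Mathlib

/-- `coloredRegular k l m n` is the number of `k`-colored partitions of `n` into parts
divisible by neither `l` nor `m`, i.e. the coefficient of `q^n` in
`∏_{j ≥ 1, l ∤ j, m ∤ j} (1 - q^j)^{-k}`.  A `k`-colored partition is a multiset of
(part, color) pairs, where parts are positive integers not divisible by `l` or `m`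
and colors range over `{0, …, k-1}`. -/
noncomputable def coloredRegular (k l m n : ℕ) : ℕ :=
  Nat.card {M : Multiset (ℕ × ℕ) //
    (∀ x ∈ M, ¬ l ∣ x.1 ∧ ¬ m ∣ x.1 ∧ x.2 < k) ∧ (M.map Prod.fst).sum = n}

/-- Descent-free construction: `3 M^2 = x^2 + 2 y^2` with `x, y` prime to 6. -/
theorem exists_rep_aux (m : ℕ) : ∀ M : ℤ, M.natAbs = m → M % 2 = 1 →
    ∃ x y : ℤ, x ^ 2 + 2 * y ^ 2 = 3 * M ^ 2 ∧ x % 2 = 1 ∧ y % 2 = 1 ∧ x % 3 ≠ 0 ∧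
      (x - y) % 3 = 0 := by
  induction m using Nat.strong_induction_on with
  | _ m ih =>
    intro M hM hodd
    by_cases h3 : M % 3 = 0
    · obtain ⟨M', rfl⟩ : ∃ M', M = 3 * M' := ⟨M / 3, by omega⟩
      obtain ⟨x, y, h1, h2, h3, h4, h5⟩ := ih M'.natAbs (by omega) M' rfl (by omega)
      refine ⟨-x - 4 * y, 2 * x - y, by linear_combination 9 * h1, by omega, by omega, by omega,
        by omega⟩
    · exact ⟨M, M, by ring, hodd, hodd, h3, by omega⟩

theorem six_form (x : ℤ) (h2 : x % 2 = 1) (h3 : x % 3 ≠ 0) : ∃ k : ℤ, (6 * k - 1) ^ 2 = x ^ 2 := by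
  have : x % 6 = 1 ∨ x % 6 = 5 := by omega
  rcases this with h | h
  · refine ⟨-(x / 6), ?_⟩
    have : 6 * (-(x / 6)) - 1 = -x := by omega
    rw [this]; ring
  · refine ⟨x / 6 + 1, ?_⟩
    have : 6 * (x / 6 + 1) - 1 = x := by omega
    rw [this]

theorem triangular_rep (n : ℕ) (i : ℤ) (hi : i * (2 * i + 1) = n) :
    ∃ k l : ℤ, 2 * (n : ℤ) = k * (3 * k - 1) + 2 * (l * (3 * l - 1)) := by
  obtain ⟨x, y, h1, h2, h3, h4, h5⟩ := exists_rep_aux _ (4 * i + 1) rfl (by omega)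
  obtain ⟨k, hk⟩ := six_form x h2 h4
  obtain ⟨l, hl⟩ := six_form y h3 (by omega)
  refine ⟨k, l, ?_⟩
  rw [← hi]
  have : 12 * (2 * (i * (2 * i + 1))) = 12 * (k * (3 * k - 1) + 2 * (l * (3 * l - 1))) := by
    linear_combination -h1 - hk - 2 * hl
  linarith

section Shanks
variable {R : Type*} [CommRing R]

def shW (x : R) (s n : ℕ) : R :=
  (∏ i ∈ Finset.Ico s n, (1 - x ^ (2 * i + 2))) * ∏ i ∈ Finset.range s, (1 - x ^ (2 * i + 1))

theorem shW_succ_right (x : R) {s n : ℕ} (h : s ≤ n) :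
    shW x s (n + 1) = (1 - x ^ (2 * n + 2)) * shW x s n := by
  unfold shW
  rw [Finset.prod_Ico_succ_top h]; ring

theorem shW_succ_left (x : R) {s n : ℕ} (h : s < n) :
    shW x (s + 1) n * (1 - x ^ (2 * s + 2)) = shW x s n * (1 - x ^ (2 * s + 1)) := by
  unfold shW
  rw [Finset.prod_range_succ, Finset.prod_eq_prod_Ico_succ_bot h]; ring

theorem sh_partial (x : R) (n m : ℕ) (h : m ≤ n) :
    ∑ s ∈ Finset.range m, shW x s (n + 1) * x ^ (s * (2 * n + 3)) =
      (1 - x ^ (2 * n + 1)) * ∑ s ∈ Finset.range m, shW x s n * x ^ (s * (2 * n + 1)) +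
      shW x m n * (1 - x ^ (2 * m)) * x ^ (m * (2 * n + 1)) := by
  induction m with
  | zero => simp
  | succ m ih =>
    rw [Finset.sum_range_succ, Finset.sum_range_succ, ih (by omega), shW_succ_right x (by omega)]
    have h1 := shW_succ_left x (s := m) (n := n) (by omega)
    have e : 2 * (m + 1) = 2 * m + 2 := by ring
    rw [e, h1]
    ring

/-- Shanks' finite form of Gauss' identity. -/
theorem shanks (x : R) (n : ℕ) :
    (∏ i ∈ Finset.range n, (1 - x ^ (2 * i + 1))) *
      ∑ j ∈ Finset.range n, (x ^ (j * (2 * j + 1)) + x ^ ((j + 1) * (2 * j + 1))) =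
    ∑ s ∈ Finset.range n, shW x s n * x ^ (s * (2 * n + 1)) := by
  induction n with
  | zero => simp
  | succ n ih =>
    rw [Finset.sum_range_succ, Finset.sum_range_succ _ n, Finset.prod_range_succ]
    have e : 2 * (n + 1) + 1 = 2 * n + 3 := by ring
    rw [e, sh_partial x n n le_rfl, ← ih, shW_succ_right x le_rfl]
    have : shW x n n = ∏ i ∈ Finset.range n, (1 - x ^ (2 * i + 1)) := by simp [shW]
    rw [this]
    ring
end Shanks

/-- The involution on pairs `(i, j)` with `i(2i+1) + 3j(2j+1) = N`. -/
def invo (p : ℤ × ℤ) : ℤ × ℤ :=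
  if (p.1 + p.2) % 2 = 0 then ((3 * p.2 - p.1) / 2, (p.1 + p.2) / 2)
  else ((p.1 - 3 * p.2 - 1) / 2, (-p.1 - p.2 - 1) / 2)

theorem invo_invo (p : ℤ × ℤ) : invo (invo p) = p := by
  obtain ⟨i, j⟩ := p
  unfold invo
  ext <;> dsimp only <;> split_ifs <;> dsimp only at * <;> omega

theorem invo_form (i j : ℤ) : (invo (i, j)).1 * (2 * (invo (i, j)).1 + 1) +
    3 * ((invo (i, j)).2 * (2 * (invo (i, j)).2 + 1)) =
    i * (2 * i + 1) + 3 * (j * (2 * j + 1)) := by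
  unfold invo
  dsimp only
  split_ifs with h
  · obtain ⟨u, hu⟩ : ∃ u, u = (i + j) / 2 := ⟨_, rfl⟩
    have h1 : (3 * j - i) / 2 = 2 * j - u := by omega
    have h2 : i = 2 * u - j := by omega
    dsimp only
    rw [h1, ← hu, h2]; ring
  · obtain ⟨u, hu⟩ : ∃ u, u = (-i - j - 1) / 2 := ⟨_, rfl⟩
    have h1 : (i - 3 * j - 1) / 2 = - u - 2 * j - 1 := by omega
    have h2 : i = -2 * u - j - 1 := by omega
    dsimp only
    rw [h1, ← hu, h2]; ring

theorem invo_fix (i j : ℤ) : invo (i, j) = (i, j) ↔ i = j ∨ i = -3 * j - 1 := by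
  unfold invo
  rw [Prod.ext_iff]
  dsimp only
  split_ifs <;> dsimp only <;> omega

theorem form_bound {i N : ℤ} (h : i * (2 * i + 1) ≤ N) : -N ≤ i ∧ i ≤ N := by
  constructor <;> rcases lt_trichotomy i 0 with h' | h' | h' <;> nlinarith

theorem form_nonneg (i : ℤ) : 0 ≤ i * (2 * i + 1) := by
  rcases lt_trichotomy i 0 with h' | h' | h' <;> nlinarith

theorem form_inj {i j : ℤ} (h : i * (2 * i + 1) = j * (2 * j + 1)) : i = j := by
  have : (i - j) * (2 * (i + j) + 1) = 0 := by linear_combination h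
  rcases mul_eq_zero.1 this with h | h <;> omega

/-- Parity of the number of representations by `i(2i+1) + 3j(2j+1)`. -/
theorem parity_count (N : ℕ) (B : Finset ℤ) (hB : B = Finset.Icc (-(N : ℤ)) N) :
    (∑ p ∈ B ×ˢ B, if p.1 * (2 * p.1 + 1) + 3 * (p.2 * (2 * p.2 + 1)) = (N : ℤ)
      then (1 : ZMod 2) else 0) =
    (∑ i ∈ B, if 4 * (i * (2 * i + 1)) = (N : ℤ) then (1 : ZMod 2) else 0) +
    ∑ j ∈ B, if 12 * (j * (2 * j + 1)) + 1 = (N : ℤ) then (1 : ZMod 2) else 0 := by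
  classical
  set F : ℤ × ℤ → ZMod 2 := fun p => if p.1 * (2 * p.1 + 1) + 3 * (p.2 * (2 * p.2 + 1)) = (N : ℤ)
      then (1 : ZMod 2) else 0 with hF
  have hmem : ∀ p : ℤ × ℤ, F p ≠ 0 → p ∈ B ×ˢ B := by
    intro p hp
    have hp : p.1 * (2 * p.1 + 1) + 3 * (p.2 * (2 * p.2 + 1)) = (N : ℤ) := by
      by_contra hne
      exact hp (if_neg hne)
    have h1 := form_nonneg p.1
    have h2 := form_nonneg p.2
    have h3 := form_bound (i := p.1) (N := N) (by linarith)
    have h4 := form_bound (i := p.2) (N := N) (by linarith)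
    simp only [hB, Finset.mem_product, Finset.mem_Icc]
    omega
  have hFi : ∀ p, F (invo p) = F p := by
    rintro ⟨i, j⟩
    simp only [hF, invo_form]
  have h0 : ∑ p ∈ (B ×ˢ B).filter (fun p => invo p ≠ p), F p = 0 := by
    rw [← Finset.sum_filter_ne_zero]
    refine Finset.sum_involution (fun p _ => invo p) ?_ ?_ ?_ ?_
    · intro p _
      rw [hFi]
      exact CharTwo.add_self_eq_zero _
    · intro p hp _
      simp only [Finset.mem_filter] at hp
      exact hp.1.2
    · intro p hp
      simp only [Finset.mem_filter] at hp ⊢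
      refine ⟨⟨hmem _ (by rw [hFi]; exact hp.2), ?_⟩, by rw [hFi]; exact hp.2⟩
      rw [invo_invo]; exact hp.1.2.symm
    · intro p _
      exact invo_invo p
  rw [← Finset.sum_filter_add_sum_filter_not _ (fun p => invo p ≠ p), h0, zero_add]
  simp only [not_not]
  have hsplit : (B ×ˢ B).filter (fun p => invo p = p) =
      (B ×ˢ B).filter (fun p => p.1 = p.2) ∪ (B ×ˢ B).filter (fun p => p.1 = -3 * p.2 - 1) := by
    ext ⟨i, j⟩
    simp only [Finset.mem_filter, Finset.mem_union, invo_fix]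
    tauto
  rw [hsplit, Finset.sum_union]
  · congr 1
    · symm
      refine Finset.sum_of_injOn (fun i => (i, i)) ?_ ?_ ?_ ?_
      · intro a _ b _ h
        exact (Prod.ext_iff.1 h).1
      · intro a ha
        simpa using ha
      · rintro ⟨a, b⟩ h1 h2
        simp only [Finset.mem_filter, Finset.mem_product] at h1
        exact absurd ⟨a, h1.1.1, by simp [h1.2]⟩ h2
      · intro i _
        congr 1
        apply propext
        constructor <;> intro h <;> linarith
    · symm
      rw [← Finset.sum_filter_ne_zero]
      refine Finset.sum_of_injOn (fun j => (-3 * j - 1, j)) ?_ ?_ ?_ ?_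
      · intro a _ b _ h
        exact (Prod.ext_iff.1 h).2
      · intro a ha
        simp only [Finset.mem_coe, Finset.mem_filter, ne_eq, ite_eq_right_iff, one_ne_zero,
          imp_false, not_not] at ha
        have : F (-3 * a - 1, a) ≠ 0 := by
          have : (-3 * a - 1) * (2 * (-3 * a - 1) + 1) + 3 * (a * (2 * a + 1)) = (N : ℤ) := by
            linear_combination ha.2
          simp only [hF, if_pos this]
          exact one_ne_zero
        simp only [Finset.mem_coe, Finset.mem_filter]
        exact ⟨hmem _ this, trivial⟩
      · rintro ⟨a, b⟩ h1 h2
        simp only [Finset.mem_filter, Finset.mem_product] at h1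
        by_contra h3
        refine absurd ⟨b, ?_, by simp only [h1.2]⟩ h2
        have h4 : a * (2 * a + 1) + 3 * (b * (2 * b + 1)) = (N : ℤ) := by
          by_contra hne
          exact h3 (if_neg hne)
        simp only [Finset.mem_coe, Finset.mem_filter, ne_eq, ite_eq_right_iff, one_ne_zero,
          imp_false, not_not]
        refine ⟨h1.1.2, ?_⟩
        rw [h1.2] at h4
        linear_combination h4
      · intro j _
        congr 1
        apply propext
        constructor <;> intro h <;> linear_combination h
  · rw [Finset.disjoint_left]
    rintro ⟨a, b⟩ h1 h2
    simp only [Finset.mem_filter] at h1 h2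
    omega

section Series
open PowerSeries PowerSeries.WithPiTopology Filter Topology

theorem sum_Ico_symm {M : Type*} [AddCommMonoid M] (g : ℤ → M) (n : ℕ) :
    ∑ j ∈ Finset.range n, (g j + g (-(j + 1))) = ∑ i ∈ Finset.Ico (-(n : ℤ)) n, g i := by
  induction n with
  | zero => simp
  | succ n ih =>
    rw [Finset.sum_range_succ, ih]
    have : Finset.Ico (-((n + 1 : ℕ) : ℤ)) ((n + 1 : ℕ) : ℤ) =
        insert (n : ℤ) (insert (-((n : ℤ) + 1)) (Finset.Ico (-(n : ℤ)) n)) := by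
      ext i
      simp only [Finset.mem_insert, Finset.mem_Ico]
      push_cast
      omega
    rw [this, Finset.sum_insert, Finset.sum_insert]
    · abel
    · simp
    · simp only [Finset.mem_insert, Finset.mem_Ico]
      omega

/-- Gauss' series `∑ q^{i(2i+1)}`, `i ∈ ℤ`, modulo 2. -/
noncomputable def psi : (ZMod 2)⟦X⟧ := PowerSeries.mk fun n =>
  ∑ i ∈ Finset.Icc (-(n : ℤ)) n, if i * (2 * i + 1) = (n : ℤ) then (1 : ZMod 2) else 0

theorem coeff_psi_of_subset {n : ℕ} {B : Finset ℤ} (h : Finset.Icc (-(n : ℤ)) n ⊆ B) :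
    coeff n psi = ∑ i ∈ B, if i * (2 * i + 1) = (n : ℤ) then (1 : ZMod 2) else 0 := by
  rw [psi, coeff_mk]
  apply Finset.sum_subset h
  intro i _ hi
  rw [if_neg]
  intro h
  exact hi (Finset.mem_Icc.2 (form_bound h.le))

theorem coeff_psi_eq_zero {n : ℕ} (h : ∀ i : ℤ, i * (2 * i + 1) ≠ (n : ℤ)) :
    coeff n psi = 0 := by
  rw [psi, coeff_mk]
  exact Finset.sum_eq_zero fun i _ => if_neg (h i)

theorem frob (f : (ZMod 2)⟦X⟧) : f ^ 2 = expand 2 two_ne_zero f := by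
  have h := MvPowerSeries.map_frobenius_expand (σ := Unit) (R := ZMod 2) 2 two_ne_zero (f := f)
  have e : frobenius (ZMod 2) 2 = RingHom.id _ := by
    ext
    simp
  rw [e, MvPowerSeries.map_id] at h
  exact h.symm

theorem frob4 (f : (ZMod 2)⟦X⟧) : f ^ 4 = expand 4 four_ne_zero f := by
  have : f ^ 4 = (f ^ 2) ^ 2 := by ring
  rw [this, frob (f ^ 2), frob f, ← expand_mul]

theorem psi_mul (p3 : (ZMod 2)⟦X⟧) (hp3 : p3 = expand 3 three_ne_zero psi) :
    psi * p3 = psi ^ 4 + X * p3 ^ 4 := by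
  rw [frob4, frob4]
  ext N
  have hsub : ∀ {n : ℕ}, n ≤ N → Finset.Icc (-(n : ℤ)) n ⊆ Finset.Icc (-(N : ℤ)) N := by
    intro n hn i hi
    simp only [Finset.mem_Icc] at *
    omega
  have hexp : ∀ (k : ℕ) (hk : k ≠ 0) (n : ℕ), n ≤ N → coeff n (expand k hk psi) =
      ∑ i ∈ Finset.Icc (-(N : ℤ)) N, if k * (i * (2 * i + 1)) = (n : ℤ)
        then (1 : ZMod 2) else 0 := by
    intro k hk n hn
    by_cases hd : k ∣ n
    · obtain ⟨m, rfl⟩ := hd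
      have hm : m ≤ N := le_trans (Nat.le_mul_of_pos_left m (Nat.pos_of_ne_zero hk)) hn
      rw [coeff_expand_mul, coeff_psi_of_subset (hsub hm)]
      refine Finset.sum_congr rfl fun i _ => ?_
      congr 1
      push_cast
      simp [hk]
    · rw [coeff_expand_of_not_dvd _ _ _ hd]
      symm
      refine Finset.sum_eq_zero fun i _ => if_neg fun h => hd ?_
      have : (k : ℤ) ∣ (n : ℤ) := ⟨_, h.symm⟩
      exact_mod_cast this
  have h12 : expand 4 four_ne_zero p3 = expand 12 (by norm_num) psi := by
    rw [hp3, ← expand_mul]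
  rw [map_add, hexp 4 _ N le_rfl, h12]
  have hX : coeff N (X * expand 12 (by norm_num) psi) = ∑ j ∈ Finset.Icc (-(N : ℤ)) N,
      if 12 * (j * (2 * j + 1)) + 1 = (N : ℤ) then (1 : ZMod 2) else 0 := by
    rcases N with _ | N
    · rw [coeff_zero_X_mul]
      symm
      refine Finset.sum_eq_zero fun i _ => if_neg fun h => ?_
      have := form_nonneg i
      push_cast at h
      linarith
    · rw [coeff_succ_X_mul, hexp 12 _ N (by omega)]
      refine Finset.sum_congr rfl fun i _ => ?_
      congr 1
      push_cast
      apply propext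
      constructor <;> intro h <;> linarith
  rw [hX, coeff_mul]
  have hpar := parity_count N _ rfl
  push_cast
  rw [← hpar]
  have : ∀ p ∈ Finset.HasAntidiagonal.antidiagonal N, coeff p.1 psi * coeff p.2 p3 =
      ∑ x ∈ Finset.Icc (-(N : ℤ)) N ×ˢ Finset.Icc (-(N : ℤ)) N,
        if x.1 * (2 * x.1 + 1) = (p.1 : ℤ) ∧ 3 * (x.2 * (2 * x.2 + 1)) = (p.2 : ℤ)
          then (1 : ZMod 2) else 0 := by
    intro p hp
    rw [Finset.HasAntidiagonal.mem_antidiagonal] at hp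
    rw [coeff_psi_of_subset (hsub (n := p.1) (by omega)), hp3, hexp 3 _ p.2 (by omega),
      Finset.sum_mul_sum, ← Finset.sum_product']
    refine Finset.sum_congr rfl fun i _ => ?_
    push_cast
    split_ifs <;> simp_all
  rw [Finset.sum_congr rfl this, Finset.sum_comm]
  refine Finset.sum_congr rfl fun x _ => ?_
  have h1 := form_nonneg x.1
  have h2 := form_nonneg x.2
  generalize x.1 * (2 * x.1 + 1) = u at *
  generalize x.2 * (2 * x.2 + 1) = v at *
  lift u to ℕ using h1
  lift v to ℕ using h2
  by_cases h : u + 3 * v = N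
  · rw [if_pos (by exact_mod_cast h), Finset.sum_eq_single (u, 3 * v)]
    · simp
    · rintro ⟨a, b⟩ _ hne
      rw [if_neg]
      rintro ⟨h3, h4⟩
      apply hne
      ext <;> dsimp only at * <;> omega
    · intro h3
      exact absurd (Finset.HasAntidiagonal.mem_antidiagonal.2 h) h3
  · rw [if_neg (by exact_mod_cast h)]
    refine Finset.sum_eq_zero fun p hp => if_neg ?_
    rw [Finset.HasAntidiagonal.mem_antidiagonal] at hp
    omega

theorem mult_gen (g : ℕ → ℕ) (hg : ∀ n, n < g n) :
    Multipliable fun n ↦ (1 : (ZMod 2)⟦X⟧) - X ^ (g n) := by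
  simp_rw [sub_eq_add_neg]
  apply multipliable_one_add_of_tendsto_order_atTop_nhds_top
  refine ENat.tendsto_nhds_top_iff_natCast_lt.mpr (fun n ↦ Filter.eventually_atTop.mpr ⟨n, ?_⟩)
  intro m hm
  rw [order_neg, order_X_pow]
  norm_cast
  exact lt_of_le_of_lt hm (hg m)

theorem mult_ite (p : ℕ → Prop) [DecidablePred p] :
    Multipliable fun n ↦ if p (n + 1) then (1 : (ZMod 2)⟦X⟧) - X ^ (n + 1) else 1 := by
  have : (fun n ↦ if p (n + 1) then (1 : (ZMod 2)⟦X⟧) - X ^ (n + 1) else 1) =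
      fun n => 1 + (if p (n + 1) then - X ^ (n + 1) else 0) := by
    ext1 n
    split_ifs <;> ring
  rw [this]
  apply multipliable_one_add_of_tendsto_order_atTop_nhds_top
  refine ENat.tendsto_nhds_top_iff_natCast_lt.mpr (fun n ↦ Filter.eventually_atTop.mpr ⟨n, ?_⟩)
  intro m hm
  split_ifs
  · rw [order_neg, order_X_pow]
    norm_cast
    omega
  · simp

/-- Gauss' identity modulo 2. -/
theorem gauss_psi : (∏' i : ℕ, ((1 : (ZMod 2)⟦X⟧) - X ^ (2 * i + 1))) * psi =
    ∏' i : ℕ, ((1 : (ZMod 2)⟦X⟧) - X ^ (2 * i + 2)) := by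
  have h1 := (mult_gen (fun i => 2 * i + 1) (fun n => by omega)).tendsto_prod_tprod_nat
  have h2 := (mult_gen (fun i => 2 * i + 2) (fun n => by omega)).tendsto_prod_tprod_nat
  have h3 : Tendsto (fun n : ℕ => ∑ j ∈ Finset.range n,
      ((X : (ZMod 2)⟦X⟧) ^ (j * (2 * j + 1)) + X ^ ((j + 1) * (2 * j + 1)))) atTop (𝓝 psi) := by
    rw [tendsto_iff_coeff_tendsto]
    intro d
    apply tendsto_const_nhds.congr'
    filter_upwards [eventually_gt_atTop d] with n hn
    rw [coeff_psi_of_subset (B := Finset.Ico (-(n : ℤ)) n), ← sum_Ico_symm, map_sum]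
    · refine Finset.sum_congr rfl fun j _ => ?_
      rw [map_add, coeff_X_pow, coeff_X_pow]
      congr 2
      · apply propext
        constructor <;> intro h
        · exact_mod_cast h.symm
        · exact_mod_cast h.symm
      · apply propext
        constructor <;> intro h
        · have : ((d : ℕ) : ℤ) = (((j + 1) * (2 * j + 1) : ℕ) : ℤ) := by
            rw [← h]; push_cast; ring
          exact_mod_cast this
        · rw [h]; push_cast; ring
    · intro i hi
      simp only [Finset.mem_Icc, Finset.mem_Ico] at *
      omega
  have h4 := h1.mul h3
  refine tendsto_nhds_unique h4 ?_
  rw [tendsto_iff_coeff_tendsto] at h2 ⊢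
  intro d
  refine (h2 d).congr' ?_
  filter_upwards [eventually_gt_atTop d] with n hn
  rw [shanks]
  obtain ⟨n, rfl⟩ : ∃ k, n = k + 1 := ⟨n - 1, by omega⟩
  rw [Finset.sum_range_succ', map_add, map_sum, Finset.sum_eq_zero, zero_add]
  · simp [shW]
  · intro s _
    rw [coeff_mul_X_pow', if_neg]
    nlinarith

/-- Euler's product modulo 2. -/
noncomputable def eu : (ZMod 2)⟦X⟧ := ∏' i : ℕ, (1 - X ^ (i + 1))

theorem expand_eu (k : ℕ) (hk : k ≠ 0) :
    expand k hk eu = ∏' i : ℕ, ((1 : (ZMod 2)⟦X⟧) - X ^ (k * (i + 1))) := by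
  rw [eu, (multipliable_one_sub_X_pow (ZMod 2)).map_tprod (expand k hk)]
  · simp [pow_mul]
  · rw [continuous_iff_continuousAt]
    intro f
    unfold ContinuousAt
    rw [tendsto_iff_coeff_tendsto]
    intro d
    simp only [coeff_expand]
    split_ifs
    · exact (continuous_coeff (ZMod 2) (d / k)).tendsto f
    · exact tendsto_const_nhds

theorem tprod_dvd_eq (k : ℕ) (hk : k ≠ 0) :
    (∏' i : ℕ, if k ∣ i + 1 then ((1 : (ZMod 2)⟦X⟧) - X ^ (i + 1)) else 1) = expand k hk eu := by
  have hm : 0 < k := Nat.pos_of_ne_zero hk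
  rw [expand_eu]
  refine tprod_eq_tprod_of_ne_one_bij (fun i ↦ k * (i.val + 1) - 1) ?_ ?_ ?_
  · intro a b h
    have h1 : 0 < k * (a.val + 1) := by positivity
    have h2 : 0 < k * (b.val + 1) := by positivity
    have h3 : k * (a.val + 1) = k * (b.val + 1) := by
      dsimp only at h
      omega
    have := Nat.eq_of_mul_eq_mul_left hm h3
    exact SetCoe.ext (by omega)
  · suffices ∀ (i : ℕ), k ∣ i + 1 → ∃ j, k * (j + 1) - 1 = i by simpa
    intro i hi
    obtain ⟨j, hj⟩ := hi
    have : j ≠ 0 := by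
      rintro rfl
      omega
    obtain ⟨j, rfl⟩ := Nat.exists_eq_succ_of_ne_zero this
    exact ⟨j, by rw [← Nat.succ_eq_add_one, ← hj]; omega⟩
  · intro i
    have h1 : 0 < k * (i.val + 1) := by positivity
    have : k * (i.val + 1) - 1 + 1 = k * (i.val + 1) := by omega
    simp [this]

theorem eu_ne_zero : eu ≠ 0 := tprod_one_sub_X_pow_ne_zero (ZMod 2)

theorem psi_eq : psi = eu ^ 3 := by
  have h := gauss_psi
  have h2 : ∏' i : ℕ, ((1 : (ZMod 2)⟦X⟧) - X ^ (2 * i + 2)) = eu ^ 2 := by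
    rw [frob, expand_eu]
    rfl
  have h3 := tprod_even_mul_odd (f := fun i : ℕ => (1 : (ZMod 2)⟦X⟧) - X ^ (i + 1))
    (mult_gen (fun i => 2 * i + 1) (fun n => by omega))
    (mult_gen (fun i => 2 * i + 1 + 1) (fun n => by omega))
  have h4 : (∏' i : ℕ, ((1 : (ZMod 2)⟦X⟧) - X ^ (2 * i + 1))) * eu ^ 2 = eu := by
    rw [← h2]
    exact h3
  rw [h2] at h
  apply mul_left_cancel₀ eu_ne_zero
  calc eu * psi = eu ^ 2 * ((∏' i : ℕ, ((1 : (ZMod 2)⟦X⟧) - X ^ (2 * i + 1))) * psi) := by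
        conv_lhs => rw [← h4]
        ring
    _ = eu * eu ^ 3 := by rw [h]; ring

/-- The generating function of one-colored restricted partitions modulo 2. -/
theorem restricted_mul (p3 : (ZMod 2)⟦X⟧) (hp3 : p3 = expand 3 three_ne_zero psi) :
    (PowerSeries.mk fun n ↦
      ((Nat.Partition.restricted n (fun i => ¬ 3 ∣ i ∧ ¬ 4 ∣ i)).card : ZMod 2)) * p3 = psi := by
  set a := (PowerSeries.mk fun n ↦
      ((Nat.Partition.restricted n (fun i => ¬ 3 ∣ i ∧ ¬ 4 ∣ i)).card : ZMod 2)) with ha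
  have h1 : a * (∏' i : ℕ, if ¬ 3 ∣ i + 1 ∧ ¬ 4 ∣ i + 1 then
      ((1 : (ZMod 2)⟦X⟧) - X ^ (i + 1)) else 1) = 1 := by
    rw [ha, Nat.Partition.powerSeriesMk_card_restricted_eq_tprod,
      ← (Nat.Partition.multipliable_powerSeriesMk_card_restricted (ZMod 2)
        (fun i => ¬ 3 ∣ i ∧ ¬ 4 ∣ i)).tprod_mul (mult_ite (fun i => ¬ 3 ∣ i ∧ ¬ 4 ∣ i))]
    convert tprod_one with i
    split_ifs
    · simp_rw [pow_mul]
      exact tsum_pow_mul_one_sub_of_constantCoeff_eq_zero (by simp)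
    · simp
  set D := (∏' i : ℕ, if ¬ 3 ∣ i + 1 ∧ ¬ 4 ∣ i + 1 then
      ((1 : (ZMod 2)⟦X⟧) - X ^ (i + 1)) else 1) with hD
  have h2 : D * expand 3 three_ne_zero eu * expand 4 four_ne_zero eu =
      eu * expand 12 (by norm_num) eu := by
    rw [← tprod_dvd_eq, ← tprod_dvd_eq, ← tprod_dvd_eq, hD,
      ← (mult_ite (fun i => ¬ 3 ∣ i ∧ ¬ 4 ∣ i)).tprod_mul (mult_ite (fun i => 3 ∣ i)),
      ← ((mult_ite (fun i => ¬ 3 ∣ i ∧ ¬ 4 ∣ i)).mul (mult_ite (fun i => 3 ∣ i))).tprod_mul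
        (mult_ite (fun i => 4 ∣ i)), eu,
      ← (multipliable_one_sub_X_pow (ZMod 2)).tprod_mul (mult_ite (fun i => 12 ∣ i))]
    congr 1
    ext1 i
    by_cases h3 : 3 ∣ i + 1 <;> by_cases h4 : 4 ∣ i + 1
    · have : 12 ∣ i + 1 := by omega
      simp [h3, h4, this]
    · have : ¬ 12 ∣ i + 1 := by omega
      simp [h3, h4, this]
    · have : ¬ 12 ∣ i + 1 := by omega
      simp [h3, h4, this]
    · have : ¬ 12 ∣ i + 1 := by omega
      simp [h3, h4, this]
  set e3 := expand 3 three_ne_zero eu with he3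
  have h12 : expand 12 (by norm_num) eu = e3 ^ 4 := by
    rw [frob4, he3, ← expand_mul]
  have hp : p3 = e3 ^ 3 := by rw [hp3, psi_eq, map_pow]
  rw [h12, ← frob4] at h2
  have he0 : e3 ≠ 0 := by
    rw [he3]
    intro h
    apply eu_ne_zero
    ext n
    rw [← coeff_expand_mul 3 three_ne_zero, h]
    simp
  have h5 : D * eu ^ 3 = e3 ^ 3 := by
    apply mul_left_cancel₀ (mul_ne_zero eu_ne_zero he0)
    linear_combination h2
  rw [hp, psi_eq, ← h5]
  linear_combination eu ^ 3 * h1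

end Series

section Count

abbrev CT (k n : ℕ) : Type := {M : Multiset (ℕ × ℕ) //
    (∀ x ∈ M, ¬ 3 ∣ x.1 ∧ ¬ 4 ∣ x.1 ∧ x.2 < k) ∧ (M.map Prod.fst).sum = n}

abbrev VT (n : ℕ) : Type := {M : Multiset ℕ // (∀ x ∈ M, ¬ 3 ∣ x ∧ ¬ 4 ∣ x) ∧ M.sum = n}

abbrev UT (k n : ℕ) : Type := {P : Multiset (ℕ × ℕ) × Multiset ℕ //
    (∀ x ∈ P.1, ¬ 3 ∣ x.1 ∧ ¬ 4 ∣ x.1 ∧ x.2 < k) ∧ (∀ x ∈ P.2, ¬ 3 ∣ x ∧ ¬ 4 ∣ x) ∧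
    (P.1.map Prod.fst).sum + P.2.sum = n}

def VTEquiv (n : ℕ) : VT n ≃
    {P : n.Partition // P ∈ Nat.Partition.restricted n (fun i => ¬ 3 ∣ i ∧ ¬ 4 ∣ i)} where
  toFun M := ⟨⟨M.1, fun {i} hi => Nat.pos_of_ne_zero (by
    rintro rfl
    exact (M.2.1 0 hi).1 (dvd_zero 3)), M.2.2⟩, by
      simpa [Nat.Partition.restricted] using M.2.1⟩
  invFun P := ⟨P.1.parts, by simpa [Nat.Partition.restricted] using P.2, P.1.parts_sum⟩
  left_inv M := rfl
  right_inv P := rfl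

def splitEquiv (k n : ℕ) : CT (k + 1) n ≃ UT k n where
  toFun M := ⟨(M.1.filter (fun x => x.2 < k), (M.1.filter (fun x => ¬ x.2 < k)).map Prod.fst), by
    refine ⟨?_, ?_, ?_⟩
    · intro x hx
      rw [Multiset.mem_filter] at hx
      exact ⟨(M.2.1 x hx.1).1, (M.2.1 x hx.1).2.1, hx.2⟩
    · intro x hx
      rw [Multiset.mem_map] at hx
      obtain ⟨y, hy, rfl⟩ := hx
      rw [Multiset.mem_filter] at hy
      exact ⟨(M.2.1 y hy.1).1, (M.2.1 y hy.1).2.1⟩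
    · dsimp only
      rw [← Multiset.sum_add, ← Multiset.map_add, Multiset.filter_add_not]
      exact M.2.2⟩
  invFun P := ⟨P.1.1 + P.1.2.map (fun x => (x, k)), by
    constructor
    · intro x hx
      rw [Multiset.mem_add, Multiset.mem_map] at hx
      rcases hx with hx | ⟨y, hy, rfl⟩
      · have := P.2.1 x hx
        exact ⟨this.1, this.2.1, by omega⟩
      · have := P.2.2.1 y hy
        exact ⟨this.1, this.2, by simp⟩
    · rw [Multiset.map_add, Multiset.sum_add, Multiset.map_map]
      simpa using P.2.2.2⟩
  left_inv M := by
    apply Subtype.ext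
    dsimp only
    rw [Multiset.map_map]
    conv_rhs => rw [← Multiset.filter_add_not (fun x => x.2 < k) M.1]
    congr 1
    conv_rhs => rw [← Multiset.map_id (Multiset.filter (fun x => ¬ x.2 < k) M.1)]
    refine Multiset.map_congr rfl fun x hx => ?_
    rw [Multiset.mem_filter] at hx
    have := M.2.1 x hx.1
    ext
    · rfl
    · simp only [Function.comp_apply, id_eq]
      omega
  right_inv P := by
    apply Subtype.ext
    have h1 : ∀ x ∈ P.1.1, x.2 < k := fun x hx => (P.2.1 x hx).2.2
    ext1
    · dsimp only
      rw [Multiset.filter_add, Multiset.filter_eq_self.2 h1, Multiset.filter_eq_nil.2, add_zero]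
      intro x hx
      rw [Multiset.mem_map] at hx
      obtain ⟨y, _, rfl⟩ := hx
      simp
    · dsimp only
      rw [Multiset.filter_add, Multiset.filter_eq_nil.2, zero_add, Multiset.filter_eq_self.2,
        Multiset.map_map]
      · simp
      · intro x hx
        rw [Multiset.mem_map] at hx
        obtain ⟨y, _, rfl⟩ := hx
        simp
      · intro x hx
        simpa using h1 x hx

def UTmap (k n : ℕ) (P : UT k n) : {p // p ∈ Finset.HasAntidiagonal.antidiagonal n} :=
  ⟨((P.1.1.map Prod.fst).sum, P.1.2.sum), Finset.HasAntidiagonal.mem_antidiagonal.2 P.2.2.2⟩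

def fiberEquiv (k n : ℕ) (p : {p // p ∈ Finset.HasAntidiagonal.antidiagonal n}) :
    {P : UT k n // UTmap k n P = p} ≃ CT k p.1.1 × VT p.1.2 where
  toFun P := (⟨P.1.1.1, P.1.2.1, congrArg (fun q => q.1.1) P.2⟩,
    ⟨P.1.1.2, P.1.2.2.1, congrArg (fun q => q.1.2) P.2⟩)
  invFun Q := ⟨⟨(Q.1.1, Q.2.1), Q.1.2.1, Q.2.2.1, by
    have := Finset.HasAntidiagonal.mem_antidiagonal.1 p.2
    dsimp only
    rw [Q.1.2.2, Q.2.2.2, this]⟩, by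
      apply Subtype.ext
      simp only [UTmap]
      rw [Q.1.2.2, Q.2.2.2]⟩
  left_inv P := rfl
  right_inv Q := rfl

def stepEquiv (k n : ℕ) : CT (k + 1) n ≃
    (Σ p : {p // p ∈ Finset.HasAntidiagonal.antidiagonal n}, CT k p.1.1 × VT p.1.2) :=
  (splitEquiv k n).trans ((Equiv.sigmaFiberEquiv (UTmap k n)).symm.trans
    (Equiv.sigmaCongrRight (fiberEquiv k n)))

instance VT_finite (n : ℕ) : Finite (VT n) := Finite.of_equiv _ (VTEquiv n).symm

theorem card_VT (n : ℕ) : Nat.card (VT n) =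
    (Nat.Partition.restricted n (fun i => ¬ 3 ∣ i ∧ ¬ 4 ∣ i)).card := by
  rw [Nat.card_congr (VTEquiv n), Nat.card_eq_fintype_card, Fintype.card_coe]

theorem CT_zero (n : ℕ) (M : CT 0 n) : M.1 = 0 :=
  Multiset.eq_zero_of_forall_notMem fun x hx => by simpa using (M.2.1 x hx).2.2

theorem CT_finite (k : ℕ) : ∀ n, Finite (CT k n) := by
  induction k with
  | zero =>
    intro n
    have : Subsingleton (CT 0 n) :=
      ⟨fun a b => Subtype.ext ((CT_zero n a).trans (CT_zero n b).symm)⟩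
    infer_instance
  | succ k ih =>
    intro n
    exact Finite.of_equiv _ (stepEquiv k n).symm

theorem colored_succ (k n : ℕ) : coloredRegular (k + 1) 3 4 n =
    ∑ p ∈ Finset.HasAntidiagonal.antidiagonal n, coloredRegular k 3 4 p.1 *
      (Nat.Partition.restricted p.2 (fun i => ¬ 3 ∣ i ∧ ¬ 4 ∣ i)).card := by
  have hf := CT_finite k
  have h1 : coloredRegular (k + 1) 3 4 n = Nat.card (CT (k + 1) n) := rfl
  rw [h1, Nat.card_congr (stepEquiv k n), Nat.card_sigma]
  simp_rw [Nat.card_prod, card_VT]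
  exact Finset.sum_coe_sort (Finset.HasAntidiagonal.antidiagonal n)
    (fun p => coloredRegular k 3 4 p.1 *
      (Nat.Partition.restricted p.2 (fun i => ¬ 3 ∣ i ∧ ¬ 4 ∣ i)).card)

theorem colored_zero (n : ℕ) : coloredRegular 0 3 4 n = if n = 0 then 1 else 0 := by
  have h1 : coloredRegular 0 3 4 n = Nat.card (CT 0 n) := rfl
  rw [h1]
  split_ifs with h
  · subst h
    have : Unique (CT 0 0) := ⟨⟨⟨0, by simp, by simp⟩⟩,
      fun a => Subtype.ext (CT_zero 0 a)⟩
    exact Nat.card_unique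
  · have : IsEmpty (CT 0 n) := ⟨fun a => h (by
      have h2 := a.2.2
      rw [CT_zero n a] at h2
      simpa using h2.symm)⟩
    exact Nat.card_of_isEmpty

open PowerSeries in
theorem colored_gf (k : ℕ) : (PowerSeries.mk fun n => (coloredRegular k 3 4 n : ℤ)) =
    (PowerSeries.mk fun n =>
      ((Nat.Partition.restricted n (fun i => ¬ 3 ∣ i ∧ ¬ 4 ∣ i)).card : ℤ)) ^ k := by
  induction k with
  | zero =>
    ext n
    simp [colored_zero, coeff_one]
  | succ k ih =>
    rw [pow_succ, ← ih]
    ext n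
    rw [coeff_mul, coeff_mk, colored_succ]
    push_cast
    simp

end Count

section Final
open PowerSeries

noncomputable def evenPart {R : Type*} [CommRing R] (f : R⟦X⟧) : R⟦X⟧ :=
  PowerSeries.mk fun n => if Even n then coeff n f else 0

noncomputable def oddPart {R : Type*} [CommRing R] (f : R⟦X⟧) : R⟦X⟧ :=
  PowerSeries.mk fun n => if Even n then 0 else coeff n f

def IsEv {R : Type*} [CommRing R] (f : R⟦X⟧) : Prop := ∀ n, ¬ Even n → coeff n f = 0
def IsOd {R : Type*} [CommRing R] (f : R⟦X⟧) : Prop := ∀ n, Even n → coeff n f = 0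

variable {R : Type*} [CommRing R]

theorem even_add_odd (f : R⟦X⟧) : f = evenPart f + oddPart f := by
  ext n
  simp only [evenPart, oddPart, map_add, coeff_mk]
  split_ifs <;> simp

theorem isEv_evenPart (f : R⟦X⟧) : IsEv (evenPart f) := fun n hn => by simp [evenPart, hn]
theorem isOd_oddPart (f : R⟦X⟧) : IsOd (oddPart f) := fun n hn => by simp [oddPart, hn]

theorem IsEv.mul {f g : R⟦X⟧} (hf : IsEv f) (hg : IsEv g) : IsEv (f * g) := by
  intro n hn
  rw [coeff_mul]
  refine Finset.sum_eq_zero fun p hp => ?_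
  rw [Finset.HasAntidiagonal.mem_antidiagonal] at hp
  by_cases h : Even p.1
  · rw [hg p.2, mul_zero]
    intro h2
    exact hn (hp ▸ h.add h2)
  · rw [hf p.1 h, zero_mul]

theorem IsOd.mul {f g : R⟦X⟧} (hf : IsOd f) (hg : IsOd g) : IsEv (f * g) := by
  intro n hn
  rw [coeff_mul]
  refine Finset.sum_eq_zero fun p hp => ?_
  rw [Finset.HasAntidiagonal.mem_antidiagonal] at hp
  by_cases h : Even p.1
  · rw [hf p.1 h, zero_mul]
  · rw [hg p.2, mul_zero]
    by_contra h2
    exact hn (hp ▸ (Nat.not_even_iff_odd.1 h).add_odd (Nat.not_even_iff_odd.1 h2))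

theorem IsOd.mul_ev {f g : R⟦X⟧} (hf : IsOd f) (hg : IsEv g) : IsOd (f * g) := by
  intro n hn
  rw [coeff_mul]
  refine Finset.sum_eq_zero fun p hp => ?_
  rw [Finset.HasAntidiagonal.mem_antidiagonal] at hp
  by_cases h : Even p.1
  · rw [hf p.1 h, zero_mul]
  · rw [hg p.2, mul_zero]
    intro h2
    exact h ((Nat.even_add.1 (hp ▸ hn)).2 h2)

theorem IsEv.add {f g : R⟦X⟧} (hf : IsEv f) (hg : IsEv g) : IsEv (f + g) := fun n hn => by
  rw [map_add, hf n hn, hg n hn, add_zero]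

theorem ev_od_unique {e o e' o' : R⟦X⟧} (he : IsEv e) (he' : IsEv e') (ho : IsOd o)
    (ho' : IsOd o') (h : e + o = e' + o') : e = e' ∧ o = o' := by
  constructor
  · ext n
    have h1 := congrArg (coeff n) h
    rw [map_add, map_add] at h1
    by_cases hn : Even n
    · rwa [ho n hn, ho' n hn, add_zero, add_zero] at h1
    · rw [he n hn, he' n hn]
  · ext n
    have h1 := congrArg (coeff n) h
    rw [map_add, map_add] at h1
    by_cases hn : Even n
    · rw [ho n hn, ho' n hn]
    · rwa [he n hn, he' n hn, zero_add, zero_add] at h1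

theorem isEv_sq (f : (ZMod 2)⟦X⟧) : IsEv (f ^ 2) := fun n hn => by
  rw [frob]
  exact coeff_expand_of_not_dvd _ _ _ (fun h => hn (even_iff_two_dvd.2 h))

theorem isOd_X_mul {f : R⟦X⟧} (hf : IsEv f) : IsOd (X * f) := by
  intro n hn
  rcases n with _ | n
  · simp
  · rw [coeff_succ_X_mul, hf]
    exact (Nat.even_add_one.1 hn)

/-- The parity computation. -/
theorem mod_two_main (a : (ZMod 2)⟦X⟧) (p3 : (ZMod 2)⟦X⟧)
    (hp3 : p3 = expand 3 three_ne_zero psi) (ha : a * p3 = psi)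
    (e o : (ZMod 2)⟦X⟧) (he : IsEv e) (ho : IsOd o) (hao : a = e + o) (m : ℕ) :
    coeff (4 * m + 3) (e * o * a ^ 2) = coeff m (psi * p3) := by
  have hp0 : p3 ≠ 0 := by
    rw [hp3, psi_eq, map_pow]
    apply pow_ne_zero
    intro h
    apply eu_ne_zero
    ext n
    rw [← coeff_expand_mul 3 three_ne_zero, h]
    simp
  have hm := psi_mul p3 hp3
  have h1 : e * p3 ^ 2 + o * p3 ^ 2 = psi ^ 4 + X * p3 ^ 4 := by
    rw [← hm, ← ha, hao]; ring
  have e4 : ∀ f : (ZMod 2)⟦X⟧, IsEv (f ^ 4) := fun f => by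
    have : f ^ 4 = (f ^ 2) ^ 2 := by ring
    rw [this]
    exact isEv_sq _
  obtain ⟨h2, h3⟩ := ev_od_unique (he.mul (isEv_sq p3)) (e4 psi) (ho.mul_ev (isEv_sq p3))
    (isOd_X_mul (e4 p3)) h1
  have h4 : o = X * p3 ^ 2 := by
    apply mul_right_cancel₀ (pow_ne_zero 2 hp0)
    rw [h3]; ring
  have h5 : e * o * a ^ 2 = X * (psi ^ 2 * a) ^ 2 := by
    rw [h4]
    linear_combination X * a ^ 2 * h2
  have e1 : 4 * m + 3 = 2 * (2 * m + 1) + 1 := by ring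
  rw [h5, e1, coeff_succ_X_mul, frob, coeff_expand_mul]
  have h6 : psi ^ 2 * a = e * psi ^ 2 + X * (psi * p3) ^ 2 := by
    rw [hao, h4]; ring
  rw [h6, map_add, (he.mul (isEv_sq psi)) (2 * m + 1) (by simp), zero_add, coeff_succ_X_mul, frob,
    coeff_expand_mul]

theorem colored_mod (m : ℕ) (h : coeff m (psi * expand 3 three_ne_zero psi) = 0) :
    coloredRegular 4 3 4 (4 * m + 3) ≡ 0 [MOD 8] := by
  set A : ℤ⟦X⟧ := PowerSeries.mk fun n =>
      ((Nat.Partition.restricted n (fun i => ¬ 3 ∣ i ∧ ¬ 4 ∣ i)).card : ℤ) with hA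
  have h1 := congrArg (coeff (4 * m + 3)) (colored_gf 4)
  rw [coeff_mk, ← hA] at h1
  set E := evenPart A with hE
  set O := oddPart A with hO
  have hEO : A = E + O := even_add_odd A
  have hEe := isEv_evenPart A
  have hOo := isOd_oddPart A
  rw [← hE] at hEe
  rw [← hO] at hOo
  have hO2 : IsEv (O * O) := hOo.mul hOo
  have hE2 : IsEv (E * E) := hEe.mul hEe
  have hodd : ¬ Even (4 * m + 3) := by
    rw [Nat.not_even_iff_odd]
    exact ⟨2 * m + 1, by ring⟩
  have h2 : A ^ 4 = (E * E) * (E * E) + (O * O) * (O * O) + (E * E) * (O * O) + (E * E) * (O * O)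
      + (E * E) * (O * O) + (E * E) * (O * O) + (E * E) * (O * O) + (E * E) * (O * O)
      - (E * E) * (O * O) * 0
      + C (4 : ℤ) * (E * O * A ^ 2) - C (8 : ℤ) * (E * O * (E * O)) := by
    have c4 : (C (4 : ℤ) : ℤ⟦X⟧) = 4 := by simp
    have c8 : (C (8 : ℤ) : ℤ⟦X⟧) = 8 := by simp
    rw [hEO, c4, c8]
    ring
  have ev := hE2.mul hO2
  rw [h2] at h1
  simp only [map_add, map_sub, coeff_C_mul, mul_zero, map_zero,
    (hE2.mul hE2) _ hodd, (hO2.mul hO2) _ hodd, ev _ hodd] at h1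
  have hmap : PowerSeries.map (Int.castRingHom (ZMod 2)) A * expand 3 three_ne_zero psi = psi := by
    have hA2 : PowerSeries.map (Int.castRingHom (ZMod 2)) A = PowerSeries.mk fun n =>
        ((Nat.Partition.restricted n (fun i => ¬ 3 ∣ i ∧ ¬ 4 ∣ i)).card : ZMod 2) := by
      ext n
      rw [coeff_map, hA, coeff_mk, coeff_mk]
      simp
    rw [hA2]
    exact restricted_mul _ rfl
  have key := mod_two_main (PowerSeries.map (Int.castRingHom (ZMod 2)) A) _ rfl
    hmap
    (PowerSeries.map (Int.castRingHom (ZMod 2)) E) (PowerSeries.map (Int.castRingHom (ZMod 2)) O)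
    (fun n hn => by rw [coeff_map, hEe n hn, map_zero])
    (fun n hn => by rw [coeff_map, hOo n hn, map_zero])
    (by rw [hEO, map_add]) m
  rw [h, ← map_mul, ← map_pow, ← map_mul, coeff_map] at key
  have h3 : (2 : ℤ) ∣ coeff (4 * m + 3) (E * O * A ^ 2) :=
    (ZMod.intCast_zmod_eq_zero_iff_dvd _ 2).1 key
  rw [Nat.modEq_zero_iff_dvd]
  omega

theorem coeff_main (n : ℕ) (h : coeff n psi = 0) :
    coeff (4 * n) (psi * expand 3 three_ne_zero psi) = 0 ∧
    coeff (12 * n + 1) (psi * expand 3 three_ne_zero psi) = 0 := by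
  rw [psi_mul _ rfl, frob4, frob4, map_add, map_add]
  constructor
  · rw [coeff_expand_mul, h, zero_add]
    rcases n with _ | n
    · simp
    · have : 4 * (n + 1) = 4 * n + 3 + 1 := by ring
      rw [this, coeff_succ_X_mul]
      exact coeff_expand_of_not_dvd _ _ _ (by omega)
  · rw [coeff_expand_of_not_dvd _ _ _ (by omega), zero_add, coeff_succ_X_mul]
    have : 12 * n = 4 * (3 * n) := by ring
    rw [this, coeff_expand_mul, coeff_expand_mul, h]

end Final

theorem stmt_8 (n : ℕ)
    (h : ∀ k l : ℤ, 2 * (n : ℤ) ≠ k * (3 * k - 1) + 2 * (l * (3 * l - 1))) :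
    coloredRegular 4 3 4 (16 * n + 3) ≡ 0 [MOD 8] ∧
    coloredRegular 4 3 4 (48 * n + 7) ≡ 0 [MOD 8] := by
  have h0 : PowerSeries.coeff n psi = 0 := by
    apply coeff_psi_eq_zero
    intro i hi
    obtain ⟨k, l, hkl⟩ := triangular_rep n i hi
    exact h k l hkl
  obtain ⟨h1, h2⟩ := coeff_main n h0
  have e1 : 16 * n + 3 = 4 * (4 * n) + 3 := by ring
  have e2 : 48 * n + 7 = 4 * (12 * n + 1) + 3 := by ring
  rw [e1, e2]
  exact ⟨colored_mod _ h1, colored_mod _ h2⟩
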